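/- Consider an AE metric on ℝ^n \ B̄_1(0) of class W^{k,q}_{−τ}, q>n, k≥1, with τ* = min{τ, n−2}, and let v ∈ W^{2,q}_{1−τ*} solve Δ_g v = Γ where Γ = g^{kl}Γ^i_{kl} ∈ W^{k-1,q}_{−1−τ}. Setting y = x − v, then dy = Id + O(|x|^{−τ*}) pointwise; in particular there exists R>0 such that y defines a diffeomorphism from a neighbourhood of infinity onto the exterior of a ball, and C^{−1}|x| ≤ |y(x)| ≤ C|x| for some C>0. -/

import Mathlib

open MeasureTheory Finset ENNReal
noncomputable section

/-- Euclidean space ℝⁿ. -/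
abbrev Eu (n : ℕ) := EuclideanSpace ℝ (Fin n)

/-- The weight function σ(x) = √(1+|x|²). -/
def sg {n : ℕ} (x : Eu n) : ℝ := Real.sqrt (1 + ‖x‖^2)

/-- The exterior region {x : R < |x|}. -/
def ext (n : ℕ) (R : ℝ) : Set (Eu n) := {x | R < ‖x‖}

/-- Weighted Sobolev norm ‖u‖_{W^{k,p}_δ} on the exterior region. -/
def wnorm (n k : ℕ) (p δ R : ℝ) {F : Type} [NormedAddCommGroup F] [NormedSpace ℝ F]
    (u : Eu n → F) : ℝ≥0∞ :=
  ∑ j ∈ Finset.range (k+1),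
    (∫⁻ x in ext n R,
      ENNReal.ofReal (‖iteratedFDerivWithin ℝ j u (ext n R) x‖ ^ p
        * sg x ^ (((j : ℝ) - δ) * p - n))) ^ (1/p : ℝ)

/-- Membership in the weighted Sobolev space W^{k,p}_δ on the exterior region. -/
def memW (n k : ℕ) (p δ R : ℝ) {F : Type} [NormedAddCommGroup F] [NormedSpace ℝ F]
    (u : Eu n → F) : Prop :=
  ContDiffOn ℝ k u (ext n R) ∧ wnorm n k p δ R u < ⊤

/-- Partial derivative ∂ᵢf of a scalar field. -/
def pd {n : ℕ} (i : Fin n) (f : Eu n → ℝ) (x : Eu n) : ℝ :=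
  fderiv ℝ f x (EuclideanSpace.single i 1)

/-- Christoffel symbols Γᵏᵢⱼ = (1/2)gᵏˡ(∂ᵢg_{lj} + ∂ⱼg_{li} − ∂_l g_{ij}). -/
def chris {n : ℕ} (g ginv : Eu n → Matrix (Fin n) (Fin n) ℝ)
    (k i j : Fin n) (x : Eu n) : ℝ :=
  (1/2) * ∑ l, ginv x k l *
    (pd i (fun y => g y l j) x + pd j (fun y => g y l i) x - pd l (fun y => g y i j) x)

/-- Laplace-Beltrami operator on scalars: Δ_g f = gᵃᵇ(∂_a∂_b f − Γᶜ_{ab}∂_c f). -/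
def lapB {n : ℕ} (g ginv : Eu n → Matrix (Fin n) (Fin n) ℝ)
    (f : Eu n → ℝ) (x : Eu n) : ℝ :=
  ∑ a, ∑ b, ginv x a b * (pd a (pd b f) x - ∑ c, chris g ginv c a b x * pd c f x)

/-- Contracted Christoffel symbols Γⁱ = gᵏˡΓⁱ_{kl}. -/
def gam {n : ℕ} (g ginv : Eu n → Matrix (Fin n) (Fin n) ℝ)
    (i : Fin n) (x : Eu n) : ℝ :=
  ∑ k, ∑ l, ginv x k l * chris g ginv i k l x

/-
On the ball `B(x, |x|/2)` the weight `σ` is comparable to `|x|`, so Morrey's inequality there bounds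
`|f x|` by `|x|^δ` times the `W^{1,q}_δ` norm of `f` outside the ball of radius `|x|/2`, and these
tails tend to `0`. Hence `v = o(|x|^{1-s})` and `dv = o(|x|^{-s})`, which gives the first claim.

For the second, `v` is Lipschitz with small constant near infinity: along segments that stay far
from the origin by the mean value inequality, and on the other segments because `|x - z|` is then
comparable to `|x| + |z|` while `v = o(|x|)`. Extending this Lipschitz map to the whole space turns
`x - v x` into a homeomorphism of `ℝⁿ`.
-/

open Filter Bornology Asymptotics
open scoped Topology NNReal

section Morrey

lemma lintegral_Ioo_zero_one_rpow {a : ℝ} (ha : -1 < a) :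
    ∫⁻ t in Set.Ioo (0 : ℝ) 1, ENNReal.ofReal (t ^ a) = ENNReal.ofReal (a + 1)⁻¹ := by
  have hint : IntegrableOn (fun t : ℝ => t ^ a) (Set.Ioo 0 1) :=
    (intervalIntegral.integrableOn_Ioo_rpow_iff one_pos).2 ha
  rw [← ofReal_integral_eq_lintegral_ofReal hint
      (ae_restrict_of_forall_mem measurableSet_Ioo fun t ht => Real.rpow_nonneg ht.1.le a),
    ← integral_Ioc_eq_integral_Ioo, ← intervalIntegral.integral_of_le zero_le_one,
    integral_rpow (Or.inl ha), Real.one_rpow, Real.zero_rpow (by linarith), sub_zero, one_div]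

lemma lintegral_enorm_le_eLpNorm'_mul_rpow_measure_univ {α G : Type*} [MeasurableSpace α]
    [NormedAddCommGroup G] {μ : Measure α} {q : ℝ} (hq : 1 ≤ q) {f : α → G}
    (hf : AEMeasurable (fun a => ‖f a‖ₑ) μ) :
    ∫⁻ a, ‖f a‖ₑ ∂μ ≤ eLpNorm' f q μ * μ Set.univ ^ (1 - 1 / q) := by
  simpa [eLpNorm'_eq_lintegral_enorm] using
    eLpNorm'_le_eLpNorm'_mul_rpow_measure_univ one_pos hq hf.aestronglyMeasurable

variable {E F : Type*} [NormedAddCommGroup E] [NormedSpace ℝ E] [NormedAddCommGroup F]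
  [NormedSpace ℝ F]

lemma enorm_sub_le_mul_lintegral_enorm_fderiv_lineMap {f : E → F} {s : Set E} (hs : IsOpen s)
    (hf : ContDiffOn ℝ 1 f s) {x z : E} (hxz : segment ℝ x z ⊆ s) :
    ‖f z - f x‖ₑ ≤
      ‖z - x‖ₑ * ∫⁻ t in Set.Ioo (0 : ℝ) 1, ‖fderiv ℝ f (AffineMap.lineMap x z t)‖ₑ := by
  have hmem : Set.MapsTo (AffineMap.lineMap x z) (Set.Icc (0 : ℝ) 1) s := fun t ht =>
    hxz (segment_eq_image_lineMap ℝ x z ▸ Set.mem_image_of_mem _ ht)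
  have hcont : ContDiffOn ℝ 1 (fun t : ℝ => f (AffineMap.lineMap x z t)) (Set.Icc 0 1) :=
    hf.comp (AffineMap.contDiff_lineMap x z).contDiffOn hmem
  have hderiv : ∀ t ∈ Set.Ioo (0 : ℝ) 1, deriv (fun t : ℝ => f (AffineMap.lineMap x z t)) t =
      fderiv ℝ f (AffineMap.lineMap x z t) (z - x) := fun t ht => by
    have hd : DifferentiableAt ℝ f (AffineMap.lineMap x z t) :=
      (hf.contDiffAt (hs.mem_nhds (hmem (Set.Ioo_subset_Icc_self ht)))).differentiableAt one_ne_zero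
    exact (hd.hasFDerivAt.comp_hasDerivAt t AffineMap.hasDerivAt_lineMap).deriv
  calc ‖f z - f x‖ₑ
      ≤ ∫⁻ t in Set.Ioo (0 : ℝ) 1, ‖deriv (fun t : ℝ => f (AffineMap.lineMap x z t)) t‖ₑ := by
        simpa [restrict_Ioo_eq_restrict_Icc] using
          enorm_sub_le_lintegral_deriv_of_contDiffOn_Icc hcont zero_le_one
    _ ≤ ∫⁻ t in Set.Ioo (0 : ℝ) 1, ‖z - x‖ₑ * ‖fderiv ℝ f (AffineMap.lineMap x z t)‖ₑ :=
        setLIntegral_mono' measurableSet_Ioo fun t ht => by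
          rw [hderiv t ht, mul_comm]
          exact ContinuousLinearMap.le_opENorm _ _
    _ = _ := lintegral_const_mul' _ _ enorm_ne_top

variable [MeasurableSpace E] [BorelSpace E]

lemma enorm_mul_measure_ball_le [SecondCountableTopology E] [CompleteSpace F] (μ : Measure E)
    [SFinite μ] {f : E → F} {x : E} {r : ℝ} (hf : ContDiffOn ℝ 1 f (Metric.ball x r)) :
    ‖f x‖ₑ * μ (Metric.ball x r) ≤ ∫⁻ z in Metric.ball x r, ‖f z‖ₑ ∂μ +
      ENNReal.ofReal r * ∫⁻ t in Set.Ioo (0 : ℝ) 1,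
        ∫⁻ z in Metric.ball x r, ‖fderiv ℝ f (AffineMap.lineMap x z t)‖ₑ ∂μ := by
  have hfm : AEMeasurable (fun z => ‖f z‖ₑ) (μ.restrict (Metric.ball x r)) :=
    hf.continuousOn.enorm.aemeasurable measurableSet_ball
  have hdm : Measurable (Function.uncurry fun (z : E) (t : ℝ) =>
      ‖fderiv ℝ f (AffineMap.lineMap x z t)‖ₑ) := by
    simp only [AffineMap.lineMap_apply_module']
    exact (measurable_fderiv ℝ f).enorm.comp (by fun_prop)
  have hpt : ∀ z ∈ Metric.ball x r, ‖f x‖ₑ ≤ ‖f z‖ₑ + ENNReal.ofReal r *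
      ∫⁻ t in Set.Ioo (0 : ℝ) 1, ‖fderiv ℝ f (AffineMap.lineMap x z t)‖ₑ := fun z hz => by
    have hx : x ∈ Metric.ball x r := Metric.mem_ball_self (Metric.pos_of_mem_ball hz)
    have hzx : ‖z - x‖ₑ ≤ ENNReal.ofReal r := by
      rw [← ofReal_norm]
      exact ENNReal.ofReal_le_ofReal (mem_ball_iff_norm.1 hz).le
    calc ‖f x‖ₑ = ‖f z - (f z - f x)‖ₑ := by rw [sub_sub_self]
      _ ≤ ‖f z‖ₑ + ‖f z - f x‖ₑ := enorm_sub_le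
      _ ≤ _ := by
        gcongr
        refine (enorm_sub_le_mul_lintegral_enorm_fderiv_lineMap Metric.isOpen_ball hf
          ((convex_ball x r).segment_subset hx hz)).trans ?_
        gcongr
  calc ‖f x‖ₑ * μ (Metric.ball x r) = ∫⁻ _ in Metric.ball x r, ‖f x‖ₑ ∂μ := by
        rw [setLIntegral_const]
    _ ≤ ∫⁻ z in Metric.ball x r, (‖f z‖ₑ + ENNReal.ofReal r *
          ∫⁻ t in Set.Ioo (0 : ℝ) 1, ‖fderiv ℝ f (AffineMap.lineMap x z t)‖ₑ) ∂μ :=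
        setLIntegral_mono' measurableSet_ball hpt
    _ = _ := by
        rw [lintegral_add_left' hfm, lintegral_const_mul' _ _ ENNReal.ofReal_ne_top,
          lintegral_lintegral_swap hdm.aemeasurable]

variable [FiniteDimensional ℝ E] (μ : Measure E) [μ.IsAddHaarMeasure]

lemma lintegral_comp_lineMap (x : E) {t : ℝ} (ht : t ≠ 0) (φ : E → ℝ≥0∞) :
    ∫⁻ z, φ (AffineMap.lineMap x z t) ∂μ =
      ENNReal.ofReal |(t ^ Module.finrank ℝ E)⁻¹| * ∫⁻ z, φ z ∂μ := by
  calc ∫⁻ z, φ (AffineMap.lineMap x z t) ∂μ = ∫⁻ z, φ (t • (z - x) + x) ∂μ := by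
        simp only [AffineMap.lineMap_apply_module']
    _ = ∫⁻ z, φ (t • z + x) ∂μ := lintegral_sub_right_eq_self (fun z => φ (t • z + x)) x
    _ = ∫⁻ z, φ (z + x) ∂(μ.map (t • ·)) :=
        ((Homeomorph.smulOfNeZero t ht).measurableEmbedding.lintegral_map fun z => φ (z + x)).symm
    _ = ENNReal.ofReal |(t ^ Module.finrank ℝ E)⁻¹| * ∫⁻ z, φ z ∂μ := by
        rw [Measure.map_addHaar_smul μ ht, lintegral_smul_measure, smul_eq_mul,
          lintegral_add_right_eq_self φ x]

lemma setLIntegral_ball_comp_lineMap_le (x : E) (r : ℝ) {t : ℝ} (ht : t ∈ Set.Ioc (0 : ℝ) 1)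
    (φ : E → ℝ≥0∞) :
    ∫⁻ z in Metric.ball x r, φ (AffineMap.lineMap x z t) ∂μ ≤
      ENNReal.ofReal (t ^ (-(Module.finrank ℝ E : ℝ))) * ∫⁻ z in Metric.ball x r, φ z ∂μ := by
  have hmem : ∀ z ∈ Metric.ball x r, AffineMap.lineMap x z t ∈ Metric.ball x r := fun z hz =>
    (convex_ball x r).lineMap_mem (Metric.mem_ball_self (Metric.pos_of_mem_ball hz)) hz
      ⟨ht.1.le, ht.2⟩
  have hjac : |(t ^ Module.finrank ℝ E)⁻¹| = t ^ (-(Module.finrank ℝ E : ℝ)) := by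
    rw [Real.rpow_neg ht.1.le, Real.rpow_natCast, abs_of_pos (inv_pos.2 (pow_pos ht.1 _))]
  rw [← hjac, ← lintegral_indicator measurableSet_ball, ← lintegral_indicator measurableSet_ball,
    ← lintegral_comp_lineMap μ x ht.1.ne']
  refine lintegral_mono fun z => ?_
  by_cases hz : z ∈ Metric.ball x r
  · rw [Set.indicator_of_mem hz, Set.indicator_of_mem (hmem z hz)]
  · simp [Set.indicator_of_notMem hz]

lemma setLIntegral_ball_enorm_comp_lineMap_le {G : Type*} [NormedAddCommGroup G] {q : ℝ}
    (hq : 1 ≤ q) {h : E → G} (hh : Measurable fun z => ‖h z‖ₑ) (x : E) (r : ℝ) {t : ℝ}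
    (ht : t ∈ Set.Ioc (0 : ℝ) 1) :
    ∫⁻ z in Metric.ball x r, ‖h (AffineMap.lineMap x z t)‖ₑ ∂μ ≤
      ENNReal.ofReal (t ^ (-(Module.finrank ℝ E : ℝ) / q)) *
        (eLpNorm' h q (μ.restrict (Metric.ball x r)) * μ (Metric.ball x r) ^ (1 - 1 / q)) := by
  have hmeas : Measurable fun z => ‖h (AffineMap.lineMap x z t)‖ₑ := by
    simp only [AffineMap.lineMap_apply_module']
    exact hh.comp (by fun_prop)
  have hscale : eLpNorm' (fun z => h (AffineMap.lineMap x z t)) q (μ.restrict (Metric.ball x r)) ≤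
      ENNReal.ofReal (t ^ (-(Module.finrank ℝ E : ℝ) / q)) *
        eLpNorm' h q (μ.restrict (Metric.ball x r)) := by
    have hle := ENNReal.rpow_le_rpow (z := 1 / q)
      (setLIntegral_ball_comp_lineMap_le μ x r ht fun z => ‖h z‖ₑ ^ q) (by positivity)
    rwa [ENNReal.mul_rpow_of_nonneg _ _ (by positivity),
      ENNReal.ofReal_rpow_of_pos (Real.rpow_pos_of_pos ht.1 _), ← Real.rpow_mul ht.1.le,
      mul_one_div] at hle
  have hholder := lintegral_enorm_le_eLpNorm'_mul_rpow_measure_univ (q := q) hq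
    (μ := μ.restrict (Metric.ball x r)) hmeas.aemeasurable
  rw [Measure.restrict_apply_univ] at hholder
  exact (hholder.trans (by gcongr)).trans_eq (mul_assoc _ _ _)

/-- **Morrey's inequality** at the centre of a ball. Scaling by `t` towards the centre multiplies
`L^q` norms by at most `t^(-d/q)`, which is integrable on `(0, 1)` exactly when `d < q`. -/
theorem enorm_le_of_contDiffOn_ball [CompleteSpace F] {q : ℝ} (hq : 1 ≤ q)
    (hdq : Module.finrank ℝ E < q) {f : E → F} {x : E} {r : ℝ} (hr : 0 < r)
    (hf : ContDiffOn ℝ 1 f (Metric.ball x r)) :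
    ‖f x‖ₑ ≤ μ (Metric.ball x r) ^ (-(1 / q)) *
      (eLpNorm' f q (μ.restrict (Metric.ball x r)) +
        ENNReal.ofReal r * ENNReal.ofReal (1 - Module.finrank ℝ E / q)⁻¹ *
          eLpNorm' (fderiv ℝ f) q (μ.restrict (Metric.ball x r))) := by
  set d := Module.finrank ℝ E
  set V := μ (Metric.ball x r)
  set N₀ := eLpNorm' f q (μ.restrict (Metric.ball x r))
  set N₁ := eLpNorm' (fderiv ℝ f) q (μ.restrict (Metric.ball x r))
  have hV₀ : V ≠ 0 := (Metric.measure_ball_pos μ x hr).ne'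
  have hV : V ≠ ⊤ := measure_ball_lt_top.ne
  have hexp : -1 < -(d : ℝ) / q := by
    rw [lt_div_iff₀ (by positivity)]
    linarith
  have hf₀ : ∫⁻ z in Metric.ball x r, ‖f z‖ₑ ∂μ ≤ N₀ * V ^ (1 - 1 / q) := by
    simpa using lintegral_enorm_le_eLpNorm'_mul_rpow_measure_univ hq
      (hf.continuousOn.enorm.aemeasurable measurableSet_ball (μ := μ))
  have hf₁ : ∫⁻ t in Set.Ioo (0 : ℝ) 1,
      ∫⁻ z in Metric.ball x r, ‖fderiv ℝ f (AffineMap.lineMap x z t)‖ₑ ∂μ ≤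
        ENNReal.ofReal (1 - d / q)⁻¹ * (N₁ * V ^ (1 - 1 / q)) := by
    rw [← neg_add_eq_sub, ← neg_div, ← lintegral_Ioo_zero_one_rpow hexp,
      ← lintegral_mul_const _ (by fun_prop)]
    exact setLIntegral_mono' measurableSet_Ioo fun t ht =>
      setLIntegral_ball_enorm_comp_lineMap_le μ hq (measurable_fderiv ℝ f).enorm x r
        ⟨ht.1, ht.2.le⟩
  calc ‖f x‖ₑ = V ^ (-1 : ℝ) * (‖f x‖ₑ * V) := by
        rw [ENNReal.rpow_neg_one, mul_left_comm, ENNReal.inv_mul_cancel hV₀ hV, mul_one]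
    _ ≤ V ^ (-1 : ℝ) * (N₀ * V ^ (1 - 1 / q) +
          ENNReal.ofReal r * (ENNReal.ofReal (1 - d / q)⁻¹ * (N₁ * V ^ (1 - 1 / q)))) := by
        gcongr
        exact (enorm_mul_measure_ball_le μ hf).trans (by gcongr)
    _ = V ^ (-1 : ℝ) * V ^ (1 - 1 / q) *
          (N₀ + ENNReal.ofReal r * ENNReal.ofReal (1 - d / q)⁻¹ * N₁) := by ring
    _ = _ := by
        rw [← ENNReal.rpow_add _ _ hV₀ hV]
        ring_nf

end Morrey

lemma eventually_norm_id_sub_comparable {E : Type*} [SeminormedAddCommGroup E] {v : E → E}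
    (hv : v =o[cobounded E] (fun x => x)) :
    ∀ᶠ x in cobounded E, (2 : ℝ)⁻¹ * ‖x‖ ≤ ‖x - v x‖ ∧ ‖x - v x‖ ≤ 2 * ‖x‖ := by
  filter_upwards [hv.def (by norm_num : (0 : ℝ) < 2⁻¹)] with x hx
  exact ⟨by linarith [norm_sub_norm_le x (v x)], by linarith [norm_sub_le x (v x), norm_nonneg x]⟩

lemma exists_bijOn_exterior_of_eqOn_homeomorph {E : Type*} [SeminormedAddCommGroup E]
    [ProperSpace E] {y : E → E} {Y : E ≃ₜ E} {s : Set E} (hs : s ∈ cobounded E)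
    (hy : Set.EqOn y Y s) :
    ∃ (U : Set E) (R₁ R₂ : ℝ), 0 < R₂ ∧ U ⊆ s ∧ {x | R₁ < ‖x‖} ⊆ U ∧ IsOpen U ∧
      Set.BijOn y U {x | R₂ < ‖x‖} := by
  have hmap : map Y (cobounded E) = cobounded E := by
    rw [Metric.cobounded_eq_cocompact, Y.map_cocompact]
  obtain ⟨r, -, hr⟩ := hasBasis_cobounded_norm.mem_iff.1 (hmap ▸ image_mem_map hs)
  have hopen : IsOpen {x : E | max r 1 < ‖x‖} := isOpen_lt continuous_const continuous_norm
  have hmem : Y ⁻¹' {x | max r 1 < ‖x‖} ∈ cobounded E := by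
    rw [← Filter.mem_map, hmap]
    exact tendsto_norm_cobounded_atTop.eventually_gt_atTop _
  obtain ⟨R₁, -, hR₁⟩ := hasBasis_cobounded_norm.mem_iff.1 hmem
  have hsub : Y ⁻¹' {x | max r 1 < ‖x‖} ⊆ s := fun x hx => by
    have h : r ≤ ‖Y x‖ := ((le_max_left r 1).trans_lt hx).le
    exact (Y.injective.mem_set_image).1 (hr h)
  refine ⟨Y ⁻¹' {x | max r 1 < ‖x‖}, R₁, max r 1, by positivity, hsub,
    fun x (hx : R₁ < ‖x‖) => hR₁ hx.le, hopen.preimage Y.continuous, ?_⟩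
  have hbij : Set.BijOn Y (Y ⁻¹' {x | max r 1 < ‖x‖}) {x | max r 1 < ‖x‖} :=
    ⟨Set.mapsTo_preimage _ _, Y.injective.injOn, (Set.image_preimage_eq _ Y.surjective).ge⟩
  exact hbij.congr (hy.symm.mono hsub)

section PerturbationOfIdentity

variable {E F : Type*} [NormedAddCommGroup E] [NormedSpace ℝ E] [NormedAddCommGroup F]
  [NormedSpace ℝ F]

lemma norm_add_norm_le_two_mul_norm_sub_of_mem_segment {x z w : E} (hw : w ∈ segment ℝ x z)
    (hx : 2 * ‖w‖ ≤ ‖x‖) (hz : 2 * ‖w‖ ≤ ‖z‖) : ‖x‖ + ‖z‖ ≤ 2 * ‖x - z‖ := by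
  have hsum := dist_add_dist_of_mem_segment hw
  simp only [dist_eq_norm] at hsum
  linarith [norm_sub_norm_le x w, norm_sub_norm_le z w, norm_sub_rev z w]

lemma exists_mem_cobounded_lipschitzOnWith {v : E → F}
    (hd : ∀ᶠ x in cobounded E, DifferentiableAt ℝ v x)
    (hdv : Tendsto (fderiv ℝ v) (cobounded E) (𝓝 0)) (hv : v =o[cobounded E] (fun x => x))
    {K : ℝ≥0} (hK : 0 < K) : ∃ s ∈ cobounded E, LipschitzOnWith K v s := by
  have hK' : (0 : ℝ) < K / 2 := half_pos hK
  have hev := hd.and ((hdv.norm.eventually_le_const (norm_zero.trans_lt hK')).and (hv.def hK'))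
  obtain ⟨R, -, hR⟩ := hasBasis_cobounded_norm.eventually_iff.1 hev
  simp only [Set.mem_ofPred_eq] at hR
  refine ⟨{x | 2 * R ≤ ‖x‖ ∧ R ≤ ‖x‖}, (eventually_cobounded_le_norm _).and
    (eventually_cobounded_le_norm _), LipschitzOnWith.of_dist_le_mul fun x hx z hz => ?_⟩
  rw [dist_eq_norm, dist_eq_norm]
  by_cases hseg : ∀ w ∈ segment ℝ x z, R ≤ ‖w‖
  · have hmvt : ‖v x - v z‖ ≤ K / 2 * ‖x - z‖ :=
      (convex_segment x z).norm_image_sub_le_of_norm_fderiv_le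
        (fun w hw => (hR (hseg w hw)).1) (fun w hw => (hR (hseg w hw)).2.1)
        (right_mem_segment ℝ x z) (left_mem_segment ℝ x z)
    linarith [mul_nonneg hK'.le (norm_nonneg (x - z))]
  · push Not at hseg
    obtain ⟨w, hw, hwR⟩ := hseg
    have hfar := norm_add_norm_le_two_mul_norm_sub_of_mem_segment hw
      (by linarith [hx.1]) (by linarith [hz.1])
    calc ‖v x - v z‖ ≤ ‖v x‖ + ‖v z‖ := norm_sub_le _ _
      _ ≤ K / 2 * ‖x‖ + K / 2 * ‖z‖ := add_le_add (hR hx.2).2.2 (hR hz.2).2.2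
      _ = K / 2 * (‖x‖ + ‖z‖) := by ring
      _ ≤ K / 2 * (2 * ‖x - z‖) := by gcongr
      _ = K * ‖x - z‖ := by ring

lemma exists_homeomorph_eqOn_id_sub [FiniteDimensional ℝ E] {v : E → E} {s : Set E}
    (hv : LipschitzOnWith (2 * lipschitzExtensionConstant E)⁻¹ v s) :
    ∃ Y : E ≃ₜ E, Set.EqOn (fun x => x - v x) Y s := by
  have happrox : ApproximatesLinearOn (fun x => x - v x)
      (ContinuousLinearEquiv.refl ℝ E : E →L[ℝ] E) s (2 * lipschitzExtensionConstant E)⁻¹ := by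
    have hsub : (fun x => x - v x) - (ContinuousLinearEquiv.refl ℝ E : E →L[ℝ] E) = -v := by
      ext x
      simp
    rw [ApproximatesLinearOn.approximatesLinearOn_iff_lipschitzOnWith, hsub]
    exact hv.neg
  refine happrox.exists_homeomorph_extension
    ((subsingleton_or_nontrivial E).imp_right fun (_ : Nontrivial E) => ?_)
  have hL := (lipschitzExtensionConstant_pos E).ne'
  calc lipschitzExtensionConstant E * (2 * lipschitzExtensionConstant E)⁻¹ = 2⁻¹ := by field_simp
    _ < 1 := by norm_num
    _ = _ := by simp

theorem exists_bijOn_exterior_id_sub [FiniteDimensional ℝ E] {v : E → E}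
    (hd : ∀ᶠ x in cobounded E, DifferentiableAt ℝ v x)
    (hdv : Tendsto (fderiv ℝ v) (cobounded E) (𝓝 0)) (hv : v =o[cobounded E] (fun x => x))
    {s : Set E} (hs : s ∈ cobounded E) :
    ∃ (U : Set E) (R₁ R₂ : ℝ), 0 < R₂ ∧ U ⊆ s ∧ {x | R₁ < ‖x‖} ⊆ U ∧ IsOpen U ∧
      Set.BijOn (fun x => x - v x) U {x | R₂ < ‖x‖} := by
  have : ProperSpace E := FiniteDimensional.proper ℝ E
  obtain ⟨t, ht, hlip⟩ := exists_mem_cobounded_lipschitzOnWith hd hdv hv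
    (inv_pos.2 (mul_pos two_pos (lipschitzExtensionConstant_pos E)))
  obtain ⟨Y, hY⟩ := exists_homeomorph_eqOn_id_sub hlip
  obtain ⟨U, R₁, R₂, hR₂, hU, h⟩ :=
    exists_bijOn_exterior_of_eqOn_homeomorph (inter_mem hs ht) (hY.mono Set.inter_subset_right)
  exact ⟨U, R₁, R₂, hR₂, hU.trans Set.inter_subset_left, h⟩

end PerturbationOfIdentity

section Components

variable {ι α G : Type*} [Fintype ι] [SeminormedAddCommGroup G] {l : Filter α} {g : α → G}

lemma isLittleO_euclidean {f : α → EuclideanSpace ℝ ι} :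
    f =o[l] g ↔ ∀ i, (fun a => f a i) =o[l] g := by
  rw [← isLittleO_pi (f := fun a i => f a i)]
  exact ⟨((EuclideanSpace.equiv ι ℝ).isBigO_comp f l).trans_isLittleO,
    ((EuclideanSpace.equiv ι ℝ).isBigO_comp_rev f l).trans_isLittleO⟩

variable {E : Type*} [NormedAddCommGroup E] [NormedSpace ℝ E]

lemma isLittleO_clm_euclidean {L : α → E →L[ℝ] EuclideanSpace ℝ ι}
    (hL : ∀ i, (fun a => EuclideanSpace.proj i ∘L L a) =o[l] g) : L =o[l] g := by
  classical
  have hsum : L = fun a => ∑ i, (EuclideanSpace.proj i ∘L L a).smulRight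
      (EuclideanSpace.single i (1 : ℝ)) := by
    ext a x j
    simp [Finset.sum_apply, Pi.single_apply]
  rw [hsum]
  refine IsLittleO.fun_sum fun i _ => ?_
  have hle : ∀ a, ‖(EuclideanSpace.proj i ∘L L a).smulRight (EuclideanSpace.single i (1 : ℝ))‖ ≤
      ‖EuclideanSpace.proj i ∘L L a‖ := fun a => by
    simp [ContinuousLinearMap.norm_smulRight_apply]
  exact (isBigO_of_le l hle).trans_isLittleO (hL i)

lemma isLittleO_fderiv_euclidean {l : Filter E} {g : E → G} {v : E → EuclideanSpace ℝ ι}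
    (hd : ∀ᶠ x in l, DifferentiableAt ℝ v x) (hv : ∀ i, fderiv ℝ (fun x => v x i) =o[l] g) :
    fderiv ℝ v =o[l] g := by
  refine isLittleO_clm_euclidean fun i => (hv i).congr' ?_ .rfl
  filter_upwards [hd] with x hx
  exact ((EuclideanSpace.proj (𝕜 := ℝ) i).hasFDerivAt.comp x hx.hasFDerivAt).fderiv

end Components

section WeightedSobolev

lemma isBigO_norm_rpow_cobounded {E : Type*} [SeminormedAddCommGroup E] {a : ℝ} (ha : a ≤ 1) :
    (fun x : E => ‖x‖ ^ a) =O[cobounded E] fun x => x := by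
  refine IsBigO.of_bound' ?_
  filter_upwards [tendsto_norm_cobounded_atTop.eventually_ge_atTop 1] with x hx
  rw [Real.norm_of_nonneg (by positivity)]
  exact Real.rpow_le_self_of_one_le hx ha

lemma rpow_le_max_mul_rpow {a b c e : ℝ} (ha : 0 < a) (hab : a ≤ b) (hbc : b ≤ c * a) :
    a ^ e ≤ max 1 (c ^ (-e)) * b ^ e := by
  have hb : 0 < b := ha.trans_le hab
  have hc : 0 < c := pos_of_mul_pos_left (hb.trans_le hbc) ha.le
  rcases le_total 0 e with he | he
  · calc a ^ e ≤ 1 * b ^ e := by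
          rw [one_mul]
          exact Real.rpow_le_rpow ha.le hab he
      _ ≤ _ := by gcongr; exact le_max_left _ _
  · calc a ^ e = c ^ (-e) * (c * a) ^ e := by
          rw [Real.mul_rpow hc.le ha.le, ← mul_assoc, ← Real.rpow_add hc, neg_add_cancel,
            Real.rpow_zero, one_mul]
      _ ≤ max 1 (c ^ (-e)) * b ^ e :=
          mul_le_mul (le_max_right _ _) (Real.rpow_le_rpow_of_nonpos hb hbc he) (by positivity)
            (by positivity)

variable {n : ℕ}

lemma isOpen_ext (R : ℝ) : IsOpen (ext n R) := isOpen_lt continuous_const continuous_norm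

lemma ext_mem_cobounded (R : ℝ) : ext n R ∈ cobounded (Eu n) :=
  tendsto_norm_cobounded_atTop.eventually_gt_atTop R

lemma antitone_ext : Antitone (ext n) := fun _ _ hab _ hx => lt_of_le_of_lt hab hx

lemma ball_subset_ext {x : Eu n} {r : ℝ} (hx : ‖x‖ = 2 * r) : Metric.ball x r ⊆ ext n r :=
  fun z hz => by
    have h := norm_sub_norm_le x z
    rw [norm_sub_rev] at h
    exact (by linarith [mem_ball_iff_norm.1 hz] : r < ‖z‖)

lemma norm_le_sg (x : Eu n) : ‖x‖ ≤ sg x := Real.le_sqrt_of_sq_le (by linarith)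

lemma sg_le_one_add_norm (x : Eu n) : sg x ≤ 1 + ‖x‖ :=
  Real.sqrt_le_iff.2 ⟨by positivity, by nlinarith [norm_nonneg x]⟩

lemma rpow_le_mul_sg_rpow_of_mem_ball {x z : Eu n} {r : ℝ} (hr : 1 ≤ r) (hx : ‖x‖ = 2 * r)
    (hz : z ∈ Metric.ball x r) (e : ℝ) : r ^ e ≤ max 1 (4 ^ (-e)) * sg z ^ e := by
  have hlow : r < ‖z‖ := ball_subset_ext hx hz
  have hupp : ‖z‖ < 3 * r := by linarith [norm_sub_norm_le z x, mem_ball_iff_norm.1 hz]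
  exact rpow_le_max_mul_rpow (one_pos.trans_le hr) (hlow.le.trans (norm_le_sg z))
    ((sg_le_one_add_norm z).trans (by linarith))

lemma tendsto_setLIntegral_ext_atTop {R : ℝ} {w : Eu n → ℝ≥0∞} (hw : ∫⁻ x in ext n R, w x ≠ ⊤) :
    Tendsto (fun ρ => ∫⁻ x in ext n ρ, w x) atTop (𝓝 0) := by
  have hinter : ⋂ ρ, ext n ρ = ∅ :=
    Set.eq_empty_of_forall_notMem fun x hx => lt_irrefl ‖x‖ (Set.mem_iInter.1 hx ‖x‖)
  have happ : ∀ ρ, volume.withDensity w (ext n ρ) = ∫⁻ x in ext n ρ, w x := fun ρ =>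
    withDensity_apply _ (isOpen_ext ρ).measurableSet
  have h := tendsto_measure_iInter_atTop (μ := volume.withDensity w)
    (fun ρ => (isOpen_ext ρ).measurableSet.nullMeasurableSet) (antitone_ext (n := n))
    ⟨R, by rwa [happ]⟩
  rw [hinter, measure_empty] at h
  exact h.congr happ

variable {F : Type} [NormedAddCommGroup F] [NormedSpace ℝ F] {k : ℕ} {p δ R : ℝ} {u : Eu n → F}

lemma wnorm_eq_sum_iteratedFDeriv :
    wnorm n k p δ R u = ∑ j ∈ range (k + 1), (∫⁻ x in ext n R, ENNReal.ofReal
      (‖iteratedFDeriv ℝ j u x‖ ^ p * sg x ^ (((j : ℝ) - δ) * p - n))) ^ (1 / p) := by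
  refine Finset.sum_congr rfl fun j _ => ?_
  rw [setLIntegral_congr_fun (isOpen_ext R).measurableSet fun x hx => ?_]
  simp only [iteratedFDerivWithin_of_isOpen j (isOpen_ext R) hx]

lemma wnorm_zero :
    wnorm n 0 p δ R u =
      (∫⁻ x in ext n R, ENNReal.ofReal (‖u x‖ ^ p * sg x ^ (-δ * p - n))) ^ (1 / p) := by
  simp [wnorm_eq_sum_iteratedFDeriv]

lemma wnorm_succ :
    wnorm n (k + 1) p δ R u = wnorm n k p (δ - 1) R (fderiv ℝ u) + wnorm n 0 p δ R u := by
  simp only [wnorm_eq_sum_iteratedFDeriv, Finset.sum_range_succ' _ (k + 1),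
    norm_iteratedFDeriv_fderiv, zero_add, Finset.sum_range_one]
  congr! 8
  push_cast
  ring

namespace memW

lemma of_le {j : ℕ} (hjk : j ≤ k) (hu : memW n k p δ R u) : memW n j p δ R u :=
  ⟨hu.1.of_le (mod_cast hjk),
    (Finset.sum_le_sum_of_subset (Finset.range_mono (by lia))).trans_lt hu.2⟩

protected lemma fderiv (hu : memW n (k + 1) p δ R u) : memW n k p (δ - 1) R (fderiv ℝ u) :=
  ⟨hu.1.fderiv_of_isOpen (isOpen_ext R) le_rfl, lt_of_le_of_lt (by simp [wnorm_succ]) hu.2⟩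

lemma tendsto_wnorm_atTop (hp : 0 < p) (hu : memW n k p δ R u) :
    Tendsto (fun ρ => wnorm n k p δ ρ u) atTop (𝓝 0) := by
  have hfin := hu.2
  simp only [wnorm_eq_sum_iteratedFDeriv] at hfin ⊢
  rw [← Finset.sum_const_zero (s := range (k + 1))]
  refine tendsto_finsetSum _ fun j hj => ?_
  have hj' := (rpow_lt_top_iff_of_pos (by positivity)).1 (ENNReal.sum_lt_top.1 hfin j hj)
  simpa [hp] using (tendsto_setLIntegral_ext_atTop hj'.ne).ennrpow_const (1 / p)

end memW

lemma eLpNorm'_restrict_ball_le_mul_wnorm_zero {G : Type} [NormedAddCommGroup G] [NormedSpace ℝ G]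
    (hp : 0 < p) (δ : ℝ) {x : Eu n} {r : ℝ} (hr : 1 ≤ r) (hx : ‖x‖ = 2 * r) (h : Eu n → G) :
    eLpNorm' h p (volume.restrict (Metric.ball x r)) ≤
      ENNReal.ofReal (max 1 (4 ^ (δ * p + n)) ^ (1 / p)) * ENNReal.ofReal (r ^ (δ + n / p)) *
        wnorm n 0 p δ r h := by
  have hr₀ : 0 < r := one_pos.trans_le hr
  set K : ℝ := max 1 (4 ^ (δ * p + n))
  have hpt : ∀ z ∈ Metric.ball x r, ‖h z‖ₑ ^ p ≤ ENNReal.ofReal (K * r ^ (δ * p + n)) *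
      ENNReal.ofReal (‖h z‖ ^ p * sg z ^ (-δ * p - n)) := fun z hz => by
    have hw := rpow_le_mul_sg_rpow_of_mem_ball hr hx hz (-δ * p - n)
    rw [show -(-δ * p - n) = δ * p + n by ring] at hw
    rw [← ofReal_norm, ENNReal.ofReal_rpow_of_nonneg (norm_nonneg _) hp.le,
      ← ENNReal.ofReal_mul (by positivity)]
    refine ENNReal.ofReal_le_ofReal ?_
    calc ‖h z‖ ^ p = r ^ (δ * p + n) * (‖h z‖ ^ p * r ^ (-δ * p - n)) := by
          rw [mul_left_comm, ← Real.rpow_add hr₀, show δ * p + n + (-δ * p - n) = 0 by ring,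
            Real.rpow_zero, mul_one]
      _ ≤ r ^ (δ * p + n) * (‖h z‖ ^ p * (K * sg z ^ (-δ * p - n))) := by gcongr
      _ = _ := by ring
  have hint := (setLIntegral_mono' (μ := volume) measurableSet_ball hpt).trans_eq
    (lintegral_const_mul' _ _ ENNReal.ofReal_ne_top)
  have hexp : (K * r ^ (δ * p + n)) ^ (1 / p) = K ^ (1 / p) * r ^ (δ + n / p) := by
    rw [Real.mul_rpow (by positivity) (by positivity), ← Real.rpow_mul hr₀.le]
    congr 2
    field_simp
  rw [eLpNorm'_eq_lintegral_enorm, wnorm_zero, ← ENNReal.ofReal_mul (by positivity), ← hexp,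
    ← ENNReal.ofReal_rpow_of_nonneg (by positivity) (by positivity),
    ← ENNReal.mul_rpow_of_nonneg _ _ (by positivity)]
  gcongr
  exact hint.trans (by gcongr; exact ball_subset_ext hx)

lemma volume_ball_rpow {x : Eu n} {r : ℝ} (hr : 0 < r) (a : ℝ) :
    volume (Metric.ball x r) ^ a =
      ENNReal.ofReal (r ^ (n * a)) * volume (Metric.ball (0 : Eu n) 1) ^ a := by
  rw [Measure.addHaar_ball_of_pos volume x hr, finrank_euclideanSpace_fin,
    ENNReal.mul_rpow_of_ne_top ENNReal.ofReal_ne_top measure_ball_lt_top.ne,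
    ENNReal.ofReal_rpow_of_pos (by positivity), ← Real.rpow_natCast, ← Real.rpow_mul hr.le]

lemma exists_volume_ball_rpow_mul_eLpNorm'_le_wnorm_zero (G : Type) [NormedAddCommGroup G]
    [NormedSpace ℝ G] (hp : 0 < p) (δ : ℝ) :
    ∃ K : ℝ≥0∞, K ≠ ⊤ ∧ ∀ (h : Eu n → G) {x : Eu n} {r : ℝ}, 1 ≤ r → ‖x‖ = 2 * r →
      volume (Metric.ball x r) ^ (-(1 / p)) * eLpNorm' h p (volume.restrict (Metric.ball x r)) ≤
        K * ENNReal.ofReal (r ^ δ) * wnorm n 0 p δ r h := by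
  let K : ℝ≥0∞ := ENNReal.ofReal (max 1 (4 ^ (δ * p + n)) ^ (1 / p))
  let V : ℝ≥0∞ := volume (Metric.ball (0 : Eu n) 1) ^ (-(1 / p))
  have hV : V ≠ ⊤ := by
    simp [V, ENNReal.rpow_eq_top_iff, (Metric.measure_ball_pos volume (0 : Eu n) one_pos).ne',
      measure_ball_lt_top.ne]
  refine ⟨V * K, by finiteness, fun h x r hr hx => ?_⟩
  have hr₀ : 0 < r := one_pos.trans_le hr
  have hscale : ENNReal.ofReal (r ^ (n * -(1 / p))) * ENNReal.ofReal (r ^ (δ + n / p)) =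
      ENNReal.ofReal (r ^ δ) := by
    rw [← ENNReal.ofReal_mul (by positivity), ← Real.rpow_add hr₀]
    ring_nf
  rw [volume_ball_rpow hr₀]
  calc ENNReal.ofReal (r ^ (n * -(1 / p))) * V *
        eLpNorm' h p (volume.restrict (Metric.ball x r))
      ≤ ENNReal.ofReal (r ^ (n * -(1 / p))) * V *
          (K * ENNReal.ofReal (r ^ (δ + n / p)) * wnorm n 0 p δ r h) := by
        gcongr
        exact eLpNorm'_restrict_ball_le_mul_wnorm_zero hp δ hr hx h
    _ = V * K * (ENNReal.ofReal (r ^ (n * -(1 / p))) * ENNReal.ofReal (r ^ (δ + n / p))) *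
          wnorm n 0 p δ r h := by ring
    _ = V * K * ENNReal.ofReal (r ^ δ) * wnorm n 0 p δ r h := by rw [hscale]

lemma exists_enorm_le_mul_wnorm_one [CompleteSpace F] (hp : 1 ≤ p) (hnp : n < p) (δ : ℝ) :
    ∃ C : ℝ≥0∞, C ≠ ⊤ ∧ ∀ {f : Eu n → F} {x : Eu n} {r : ℝ}, 1 ≤ r → ‖x‖ = 2 * r →
      ContDiffOn ℝ 1 f (ext n r) → ‖f x‖ₑ ≤ C * ENNReal.ofReal (r ^ δ) * wnorm n 1 p δ r f := by
  have hp₀ : 0 < p := one_pos.trans_le hp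
  obtain ⟨K₀, hK₀, hle₀⟩ := exists_volume_ball_rpow_mul_eLpNorm'_le_wnorm_zero (n := n) F hp₀ δ
  obtain ⟨K₁, hK₁, hle₁⟩ :=
    exists_volume_ball_rpow_mul_eLpNorm'_le_wnorm_zero (n := n) (Eu n →L[ℝ] F) hp₀ (δ - 1)
  let c : ℝ≥0∞ := ENNReal.ofReal (1 - n / p)⁻¹
  refine ⟨K₀ + c * K₁, by finiteness, fun {f x r} hr hx hf => ?_⟩
  have hr₀ : 0 < r := one_pos.trans_le hr
  have hscale : ENNReal.ofReal r * ENNReal.ofReal (r ^ (δ - 1)) = ENNReal.ofReal (r ^ δ) := by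
    rw [← ENNReal.ofReal_mul hr₀.le, mul_comm, ← Real.rpow_add_one hr₀.ne', sub_add_cancel]
  have hmorrey := enorm_le_of_contDiffOn_ball volume hp (by simpa using hnp) hr₀
    (hf.mono (ball_subset_ext hx))
  rw [finrank_euclideanSpace_fin, mul_add, mul_left_comm] at hmorrey
  calc ‖f x‖ₑ
      ≤ K₀ * ENNReal.ofReal (r ^ δ) * wnorm n 0 p δ r f + ENNReal.ofReal r * c *
          (K₁ * ENNReal.ofReal (r ^ (δ - 1)) * wnorm n 0 p (δ - 1) r (fderiv ℝ f)) :=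
        hmorrey.trans (add_le_add (hle₀ f hr hx) (mul_le_mul_right (hle₁ (fderiv ℝ f) hr hx) _))
    _ = K₀ * ENNReal.ofReal (r ^ δ) * wnorm n 0 p δ r f +
          c * K₁ * ENNReal.ofReal (r ^ δ) * wnorm n 0 p (δ - 1) r (fderiv ℝ f) := by
        rw [← hscale]
        ring
    _ ≤ (K₀ + c * K₁) * ENNReal.ofReal (r ^ δ) * wnorm n 0 p δ r f +
          (K₀ + c * K₁) * ENNReal.ofReal (r ^ δ) * wnorm n 0 p (δ - 1) r (fderiv ℝ f) := by
        gcongr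
        exacts [le_self_add, le_add_self]
    _ = (K₀ + c * K₁) * ENNReal.ofReal (r ^ δ) * wnorm n 1 p δ r f := by
        rw [wnorm_succ (k := 0)]
        ring

lemma memW.eventually_differentiableAt (hk : 1 ≤ k) (hu : memW n k p δ R u) :
    ∀ᶠ x in cobounded (Eu n), DifferentiableAt ℝ u x := by
  filter_upwards [ext_mem_cobounded R] with x hx
  exact ((hu.of_le hk).1.contDiffAt ((isOpen_ext R).mem_nhds hx)).differentiableAt (by simp)

theorem memW.isLittleO_cobounded [CompleteSpace F] (hnp : n < p) (hk : 1 ≤ k)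
    (hu : memW n k p δ R u) : u =o[cobounded (Eu n)] fun x => ‖x‖ ^ δ := by
  rcases Nat.eq_zero_or_pos n with rfl | hn
  · rw [cobounded_eq_bot]
    exact isLittleO_bot _ _
  have hp : 1 ≤ p := (Nat.one_le_cast.2 hn).trans hnp.le
  obtain ⟨C, hC, hbound⟩ := exists_enorm_le_mul_wnorm_one (F := F) hp hnp δ
  have hhalf : Tendsto (fun x : Eu n => ‖x‖ / 2) (cobounded (Eu n)) atTop :=
    tendsto_norm_cobounded_atTop.atTop_div_const two_pos
  have hsmall : Tendsto (fun x => C * wnorm n 1 p δ (‖x‖ / 2) u) (cobounded (Eu n)) (𝓝 0) := by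
    simpa using ENNReal.Tendsto.const_mul
      (((hu.of_le hk).tendsto_wnorm_atTop (one_pos.trans_le hp)).comp hhalf) (Or.inr hC)
  have ho : u =o[cobounded (Eu n)] fun x => (‖x‖ / 2) ^ δ := by
    refine IsLittleO.of_bound fun c hc => ?_
    filter_upwards [hsmall.eventually_lt_const (ENNReal.ofReal_pos.2 hc),
      hhalf.eventually_ge_atTop 1, hhalf.eventually_ge_atTop R] with x hxc hx1 hxR
    have hle := hbound (x := x) hx1 (by ring) ((hu.of_le hk).1.mono (antitone_ext hxR))
    rw [← ENNReal.ofReal_le_ofReal_iff (by positivity), ofReal_norm]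
    calc ‖u x‖ₑ ≤ C * wnorm n 1 p δ (‖x‖ / 2) u * ENNReal.ofReal ((‖x‖ / 2) ^ δ) := by
          rwa [mul_right_comm]
      _ ≤ ENNReal.ofReal c * ENNReal.ofReal ((‖x‖ / 2) ^ δ) := by gcongr
      _ = _ := by
          rw [← ENNReal.ofReal_mul hc.le, Real.norm_of_nonneg (by positivity)]
  have hdiv : (fun x : Eu n => (‖x‖ / 2) ^ δ) = fun x => (2 ^ δ)⁻¹ * ‖x‖ ^ δ := by
    ext x
    rw [Real.div_rpow (norm_nonneg x) zero_le_two, div_eq_inv_mul]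
  rw [hdiv] at ho
  exact ho.trans_isBigO (isBigO_const_mul_self _ _ _)

end WeightedSobolev

theorem harmonic_coordinates_at_infinity_general (n : ℕ) (q s R0 : ℝ) (hq : (n : ℝ) < q)
    (hs : 0 < s) (v : Eu n → Eu n) (hv : ∀ i, memW n 2 q (1 - s) R0 (fun x => v x i)) :
    (∀ ε > (0 : ℝ), ∃ R ≥ R0, ∀ x : Eu n, R ≤ ‖x‖ →
      ‖fderiv ℝ (fun z : Eu n => z - v z) x - ContinuousLinearMap.id ℝ (Eu n)‖
        ≤ ε * ‖x‖ ^ (-s)) ∧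
    ∃ (U : Set (Eu n)) (R1 R2 C : ℝ), 0 < R2 ∧ 0 < C ∧
      U ⊆ ext n R0 ∧ ext n R1 ⊆ U ∧ IsOpen U ∧
      Set.BijOn (fun z : Eu n => z - v z) U (ext n R2) ∧
      ∀ x ∈ U, C⁻¹ * ‖x‖ ≤ ‖x - v x‖ ∧ ‖x - v x‖ ≤ C * ‖x‖ := by
  have hd : ∀ᶠ x in cobounded (Eu n), DifferentiableAt ℝ v x :=
    (eventually_all.2 fun i => (hv i).eventually_differentiableAt one_le_two).mono fun _ =>
      differentiableAt_euclidean.2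
  have hvo : v =o[cobounded (Eu n)] fun x => x :=
    (isLittleO_euclidean.2 fun i => (hv i).isLittleO_cobounded hq one_le_two).trans_isBigO
      (isBigO_norm_rpow_cobounded (by linarith))
  have hdv : fderiv ℝ v =o[cobounded (Eu n)] fun x => ‖x‖ ^ (-s) :=
    isLittleO_fderiv_euclidean hd fun i => by
      simpa using (hv i).fderiv.isLittleO_cobounded hq le_rfl
  constructor
  · intro ε hε
    obtain ⟨R, -, hR⟩ := hasBasis_cobounded_norm.eventually_iff.1 (hd.and (hdv.def hε))
    refine ⟨max R R0, le_max_right R R0, fun x hx => ?_⟩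
    obtain ⟨hdx, hle⟩ := hR ((le_max_left R R0).trans hx)
    rw [fderiv_fun_sub differentiableAt_fun_id hdx, fderiv_fun_id, sub_sub_cancel_left, norm_neg]
    rwa [Real.norm_of_nonneg (by positivity)] at hle
  · have hdv0 := hdv.trans_tendsto
      ((tendsto_rpow_neg_atTop hs).comp tendsto_norm_cobounded_atTop)
    obtain ⟨U, R₁, R₂, hR₂, hU, hext, hopen, hbij⟩ := exists_bijOn_exterior_id_sub hd hdv0 hvo
      (inter_mem (ext_mem_cobounded R0) (eventually_norm_id_sub_comparable hvo))
    exact ⟨U, R₁, R₂, 2, hR₂, two_pos, fun x hx => (hU hx).1, hext, hopen, hbij,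
      fun x hx => (hU hx).2⟩

/-- harmonic coordinates near infinity.  For an AE metric g of class
W^{k,q}_{−τ}, q > n, with τ* = min{τ, n−2}, and v ∈ W^{2,q}_{1−τ*} solving
Δ_g vⁱ = Γⁱ (Γⁱ = gᵏˡΓⁱ_{kl} ∈ W^{k−1,q}_{−1−τ}), the map y = x − v(x) satisfies
dy = Id + o(|x|^{−τ*}) pointwise; in particular y defines a diffeomorphism from a
neighbourhood of infinity onto the exterior of a ball, with C⁻¹|x| ≤ |y(x)| ≤ C|x|. -/
theorem harmonic_coordinates_at_infinity (n k : ℕ) (q τ R0 : ℝ)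
    (hn : 3 ≤ n) (hk : 1 ≤ k) (hq : (n:ℝ) < q) (hτ : 0 < τ) (hR0 : 0 < R0)
    (g : Eu n → Matrix (Fin n) (Fin n) ℝ)
    (hsym : ∀ x, (g x).IsSymm)
    (hpos : ∀ x ∈ ext n R0, (g x).PosDef)
    (hdet : ∃ ε > (0:ℝ), ∀ x ∈ ext n R0, ε ≤ (g x).det)
    (hAE : ∀ i j, memW n k q (-τ) R0
      (fun x => g x i j - (1 : Matrix (Fin n) (Fin n) ℝ) i j))
    (hΓ : ∀ i, memW n (k-1) q (-1 - τ) R0 (gam g (fun y => (g y)⁻¹) i))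
    (v : Eu n → Eu n)
    (hv : ∀ i, memW n 2 q (1 - min τ ((n:ℝ) - 2)) R0 (fun x => v x i))
    (heq : ∀ (i : Fin n), ∀ x ∈ ext n R0,
      lapB g (fun y => (g y)⁻¹) (fun y => v y i) x = gam g (fun y => (g y)⁻¹) i x) :
    (∀ ε > (0:ℝ), ∃ R ≥ R0, ∀ x : Eu n, R ≤ ‖x‖ →
      ‖fderiv ℝ (fun z : Eu n => z - v z) x - ContinuousLinearMap.id ℝ (Eu n)‖
        ≤ ε * ‖x‖ ^ (-(min τ ((n:ℝ) - 2)))) ∧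
    ∃ (U : Set (Eu n)) (R1 R2 C : ℝ), 0 < R2 ∧ 0 < C ∧
      U ⊆ ext n R0 ∧ ext n R1 ⊆ U ∧ IsOpen U ∧
      Set.BijOn (fun z : Eu n => z - v z) U (ext n R2) ∧
      ∀ x ∈ U, C⁻¹ * ‖x‖ ≤ ‖x - v x‖ ∧ ‖x - v x‖ ≤ C * ‖x‖ :=
  harmonic_coordinates_at_infinity_general n q _ R0 hq
    (lt_min hτ (by rify at hn; linarith)) v hv
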